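/- Let T > 0, λ > 0, F₁, F₂ ∈ C⁰([0,T]), and let y, N ∈ C¹([0,T]) be positive functions such that |½ y'(t) + N(t) y(t)| ≤ (C₀/(T−t+λ) + C₁) y(t) + F₁(t) y(t) and N'(t) ≤ ((1+C₀)/(T−t+λ) + C₁) N(t) + F₂(t) for all t, where C₀, C₁ ≥ 0. Then for any 0 ≤ t₁ < t₂ < t₃ ≤ T, y(t₂)^{1+M} ≤ y(t₃) y(t₁)^{M} e^{4D} ((T−t₁+λ)/(T−t₃+λ))^{2C₀(1+M)}, where M = (∫_{t₂}^{t₃} e^{tC₁}/(T−t+λ)^{1+C₀} dt) / (∫_{t₁}^{t₂} e^{tC₁}/(T−t+λ)^{1+C₀} dt) and D = M (t₂−t₁) (C₁ + sup_{[t₁,t₃]} |F₁| + ∫_{t₁}^{t₃} |F₂| dt). -/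

import Mathlib

open Real Set

noncomputable section

/-- The interpolation exponent
`M = (∫_{t₂}^{t₃} e^{tC₁}/(T−t+λ)^{1+C₀} dt) / (∫_{t₁}^{t₂} e^{tC₁}/(T−t+λ)^{1+C₀} dt)`. -/
def Mconst (T lam C₀ C₁ t₁ t₂ t₃ : ℝ) : ℝ :=
  (∫ t in t₂..t₃, Real.exp (t * C₁) / (T - t + lam) ^ (1 + C₀)) /
    (∫ t in t₁..t₂, Real.exp (t * C₁) / (T - t + lam) ^ (1 + C₀))

/-- `D = M (t₂−t₁) (C₁ + sup_{[t₁,t₃]} |F₁| + ∫_{t₁}^{t₃} |F₂| dt)`. -/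
def Dconst (T lam C₀ C₁ : ℝ) (F₁ F₂ : ℝ → ℝ) (t₁ t₂ t₃ : ℝ) : ℝ :=
  Mconst T lam C₀ C₁ t₁ t₂ t₃ * (t₂ - t₁) *
    (C₁ + sSup ((fun t => |F₁ t|) '' Icc t₁ t₃) + ∫ t in t₁..t₃, |F₂ t|)

/-!
`N` plays the role of a frequency function: `½ (log y)' ≈ -N`, up to integrable errors. The weight
`w t = e^{t C₁} / (T - t + λ)^{1 + C₀}` solves the homogeneous version `w' = a w` of the inequality
for `N`, so `N / w` is almost nonincreasing. Hence `N ≳ A w` before `t₂` and `N ≲ A w` after `t₂`,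
where `A = N t₂ / w t₂`. Integrating `(½ log y)'` over `[t₁, t₂]` and `[t₂, t₃]` and combining the
two estimates with weights `M` and `1` cancels the terms in `A`, because `∫_{t₂}^{t₃} w` is
`M ∫_{t₁}^{t₂} w`; the errors are controlled through the monotonicity of `w`.
-/

open MeasureTheory

section MonotoneIntegral

variable {w : ℝ → ℝ} {s t : ℝ}

theorem sub_mul_left_le_integral_of_monotoneOn (hst : s ≤ t) (hw : MonotoneOn w (Icc s t)) :
    (t - s) * w s ≤ ∫ x in s..t, w x := by
  have hint : IntervalIntegrable w volume s t :=
    MonotoneOn.intervalIntegrable (by rwa [uIcc_of_le hst])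
  calc (t - s) * w s = ∫ _ in s..t, w s := by
        rw [intervalIntegral.integral_const, smul_eq_mul]
    _ ≤ ∫ x in s..t, w x :=
        intervalIntegral.integral_mono_on hst intervalIntegrable_const hint
          fun x hx => hw (left_mem_Icc.2 hst) hx hx.1

theorem integral_le_sub_mul_right_of_monotoneOn (hst : s ≤ t) (hw : MonotoneOn w (Icc s t)) :
    ∫ x in s..t, w x ≤ (t - s) * w t := by
  have hint : IntervalIntegrable w volume s t :=
    MonotoneOn.intervalIntegrable (by rwa [uIcc_of_le hst])
  calc ∫ x in s..t, w x ≤ ∫ _ in s..t, w t :=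
        intervalIntegral.integral_mono_on hst hint intervalIntegrable_const
          fun x hx => hw hx (right_mem_Icc.2 hst) hx.2
    _ = (t - s) * w t := by rw [intervalIntegral.integral_const, smul_eq_mul]

end MonotoneIntegral

theorem sub_le_integral_add_const_mul_integral {g g' φ w : ℝ → ℝ} {s t A B : ℝ} (hst : s ≤ t)
    (hg : ContinuousOn g (Icc s t)) (hg' : ∀ x ∈ Ioo s t, HasDerivAt g (g' x) x)
    (hφ : IntegrableOn φ (Icc s t)) (hw : IntegrableOn w (Icc s t))
    (h : ∀ x ∈ Ioo s t, g' x ≤ φ x + B + A * w x) :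
    g t - g s ≤ (∫ x in s..t, φ x) + (t - s) * B + A * ∫ x in s..t, w x := by
  have hφ' : IntervalIntegrable φ volume s t :=
    (intervalIntegrable_iff_integrableOn_Icc_of_le hst).2 hφ
  have hw' : IntervalIntegrable w volume s t :=
    (intervalIntegrable_iff_integrableOn_Icc_of_le hst).2 hw
  have hint : IntervalIntegrable (fun x => φ x + B + A * w x) volume s t :=
    (hφ'.add intervalIntegrable_const).add (hw'.const_mul A)
  calc g t - g s ≤ ∫ x in s..t, (φ x + B + A * w x) :=
        intervalIntegral.sub_le_integral_of_hasDeriv_right_of_le hst hg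
          (fun x hx => (hg' x hx).hasDerivWithinAt)
          ((intervalIntegrable_iff_integrableOn_Icc_of_le hst).1 hint) h
    _ = (∫ x in s..t, φ x) + (t - s) * B + A * ∫ x in s..t, w x := by
        rw [intervalIntegral.integral_add (hφ'.add intervalIntegrable_const) (hw'.const_mul A),
          intervalIntegral.integral_add hφ' intervalIntegrable_const,
          intervalIntegral.integral_const, intervalIntegral.integral_const_mul, smul_eq_mul]

section WeightedInterpolation

variable {a w N N' F : ℝ → ℝ}

theorem div_sub_div_le_integral_abs_div {s t : ℝ} (hst : s ≤ t)
    (hw : ∀ x ∈ Icc s t, HasDerivAt w (a x * w x) x) (hw_pos : ∀ x ∈ Icc s t, 0 < w x)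
    (hw_mono : MonotoneOn w (Icc s t))
    (hN : ContinuousOn N (Icc s t)) (hN' : ∀ x ∈ Ioo s t, HasDerivAt N (N' x) x)
    (hF : IntegrableOn F (Icc s t)) (h : ∀ x ∈ Ioo s t, N' x ≤ a x * N x + F x) :
    N t / w t - N s / w s ≤ (∫ x in s..t, |F x|) / w s := by
  have hw_cont : ContinuousOn w (Icc s t) := fun x hx => (hw x hx).continuousAt.continuousWithinAt
  have hs : s ∈ Icc s t := left_mem_Icc.2 hst
  rw [← intervalIntegral.integral_div]
  refine intervalIntegral.sub_le_integral_of_hasDeriv_right_of_le hst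
    (hN.div hw_cont fun x hx => (hw_pos x hx).ne')
    (fun x hx => ((hN' x hx).div (hw x (Ioo_subset_Icc_self hx))
      (hw_pos x (Ioo_subset_Icc_self hx)).ne').hasDerivWithinAt)
    (hF.abs.div_const (w s)) fun x hx => ?_
  have hx' := Ioo_subset_Icc_self hx
  have hwx := hw_pos x hx'
  calc (N' x * w x - N x * (a x * w x)) / w x ^ 2 = (N' x - a x * N x) / w x := by field_simp
    _ ≤ |F x| / w x := by
        gcongr
        linarith [h x hx, le_abs_self (F x)]
    _ ≤ |F x| / w s :=
        div_le_div_of_nonneg_left (abs_nonneg _) (hw_pos s hs) (hw_mono hs hx' hx.1.le)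

variable {t₁ t₂ t₃ : ℝ}

theorem div_le_div_add_integral_abs_div {s t : ℝ} (hs : t₁ ≤ s) (hst : s ≤ t) (ht : t ≤ t₃)
    (hw : ∀ x ∈ Icc t₁ t₃, HasDerivAt w (a x * w x) x) (hw_pos : ∀ x ∈ Icc t₁ t₃, 0 < w x)
    (hw_mono : MonotoneOn w (Icc t₁ t₃))
    (hN : ContinuousOn N (Icc t₁ t₃)) (hN' : ∀ x ∈ Ioo t₁ t₃, HasDerivAt N (N' x) x)
    (hF : IntegrableOn F (Icc t₁ t₃)) (h : ∀ x ∈ Ioo t₁ t₃, N' x ≤ a x * N x + F x) :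
    N t / w t ≤ N s / w s + (∫ x in t₁..t₃, |F x|) / w s := by
  have hsub : Icc s t ⊆ Icc t₁ t₃ := Icc_subset_Icc hs ht
  have hsub' : Ioo s t ⊆ Ioo t₁ t₃ := Ioo_subset_Ioo hs ht
  have hF_le : ∫ x in s..t, |F x| ≤ ∫ x in t₁..t₃, |F x| :=
    intervalIntegral.integral_mono_interval hs hst ht (ae_of_all _ fun x => abs_nonneg (F x))
      ((intervalIntegrable_iff_integrableOn_Icc_of_le (hs.trans (hst.trans ht))).2 hF.abs)
  have hsub_le := div_sub_div_le_integral_abs_div hst (fun x hx => hw x (hsub hx))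
    (fun x hx => hw_pos x (hsub hx)) (hw_mono.mono hsub) (hN.mono hsub)
    (fun x hx => hN' x (hsub' hx)) (hF.mono_set hsub) fun x hx => h x (hsub' hx)
  linarith [div_le_div_of_nonneg_right hF_le (hw_pos s ⟨hs, hst.trans ht⟩).le]

variable {M : ℝ}

theorem integral_div_le_mul_sub (h12 : t₁ ≤ t₂) (hM : 0 ≤ M) (hw₂ : 0 < w t₂)
    (hw_mono : MonotoneOn w (Icc t₁ t₂))
    (hMw : ∫ x in t₂..t₃, w x = M * ∫ x in t₁..t₂, w x) :
    (∫ x in t₂..t₃, w x) / w t₂ ≤ M * (t₂ - t₁) := by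
  rw [div_le_iff₀ hw₂, hMw, mul_assoc]
  exact mul_le_mul_of_nonneg_left (integral_le_sub_mul_right_of_monotoneOn h12 hw_mono) hM

theorem sub_le_mul_sub_of_integral_eq (h12 : t₁ ≤ t₂) (h23 : t₂ ≤ t₃) (hM : 0 ≤ M)
    (hw₂ : 0 < w t₂) (hw_mono : MonotoneOn w (Icc t₁ t₃))
    (hMw : ∫ x in t₂..t₃, w x = M * ∫ x in t₁..t₂, w x) :
    t₃ - t₂ ≤ M * (t₂ - t₁) :=
  calc t₃ - t₂ ≤ (∫ x in t₂..t₃, w x) / w t₂ := (le_div_iff₀ hw₂).2 <|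
        sub_mul_left_le_integral_of_monotoneOn h23 (hw_mono.mono (Icc_subset_Icc_left h12))
    _ ≤ M * (t₂ - t₁) :=
        integral_div_le_mul_sub h12 hM hw₂ (hw_mono.mono (Icc_subset_Icc_right h23)) hMw

variable {u u' φ : ℝ → ℝ}

theorem one_add_mul_le_of_abs_deriv_add_le (h12 : t₁ ≤ t₂) (h23 : t₂ ≤ t₃)
    (hw : ∀ x ∈ Icc t₁ t₃, HasDerivAt w (a x * w x) x) (hw_pos : ∀ x ∈ Icc t₁ t₃, 0 < w x)
    (hw_mono : MonotoneOn w (Icc t₁ t₃))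
    (hN : ContinuousOn N (Icc t₁ t₃)) (hN' : ∀ x ∈ Ioo t₁ t₃, HasDerivAt N (N' x) x)
    (hF : IntegrableOn F (Icc t₁ t₃)) (hNF : ∀ x ∈ Ioo t₁ t₃, N' x ≤ a x * N x + F x)
    (hu : ContinuousOn u (Icc t₁ t₃)) (hu' : ∀ x ∈ Ioo t₁ t₃, HasDerivAt u (u' x) x)
    (hφ : IntegrableOn φ (Icc t₁ t₃)) (huN : ∀ x ∈ Ioo t₁ t₃, |u' x + N x| ≤ φ x)
    (hM : 0 ≤ M) (hMw : ∫ x in t₂..t₃, w x = M * ∫ x in t₁..t₂, w x) :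
    (1 + M) * u t₂ ≤ u t₃ + M * u t₁ + (M * (∫ x in t₁..t₂, φ x) + ∫ x in t₂..t₃, φ x) +
      2 * (M * (t₂ - t₁)) * ∫ x in t₁..t₃, |F x| := by
  set J := ∫ x in t₁..t₃, |F x|
  set A := N t₂ / w t₂
  have ht₂ : t₂ ∈ Icc t₁ t₃ := ⟨h12, h23⟩
  have hw_int : IntegrableOn w (Icc t₁ t₃) :=
    ContinuousOn.integrableOn_Icc fun x hx => (hw x hx).continuousAt.continuousWithinAt
  have hJ_nonneg : 0 ≤ J :=
    intervalIntegral.integral_nonneg (h12.trans h23) fun x _ => abs_nonneg (F x)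
  have quotient_le {s t : ℝ} (hs : t₁ ≤ s) (hst : s ≤ t) (ht : t ≤ t₃) :
      N t / w t ≤ N s / w s + J / w s :=
    div_le_div_add_integral_abs_div hs hst ht hw hw_pos hw_mono hN hN' hF hNF
  have left : u t₂ - u t₁ ≤
      (∫ x in t₁..t₂, φ x) + (t₂ - t₁) * J + -A * ∫ x in t₁..t₂, w x := by
    have hsub : Icc t₁ t₂ ⊆ Icc t₁ t₃ := Icc_subset_Icc_right h23
    have hsub' : Ioo t₁ t₂ ⊆ Ioo t₁ t₃ := Ioo_subset_Ioo_right h23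
    refine sub_le_integral_add_const_mul_integral h12 (hu.mono hsub)
      (fun x hx => hu' x (hsub' hx)) (hφ.mono_set hsub) (hw_int.mono_set hsub) fun x hx => ?_
    have hx' := hsub (Ioo_subset_Icc_self hx)
    have hN_ge : A * w x ≤ N x + J := by
      rw [← le_div_iff₀ (hw_pos x hx'), add_div]
      exact quotient_le hx'.1 hx.2.le h23
    linarith [(abs_le.1 (huN x (hsub' hx))).2]
  have right : -u t₃ - -u t₂ ≤
      (∫ x in t₂..t₃, φ x) + (t₃ - t₂) * 0 + (A + J / w t₂) * ∫ x in t₂..t₃, w x := by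
    have hsub : Icc t₂ t₃ ⊆ Icc t₁ t₃ := Icc_subset_Icc_left h12
    have hsub' : Ioo t₂ t₃ ⊆ Ioo t₁ t₃ := Ioo_subset_Ioo_left h12
    refine sub_le_integral_add_const_mul_integral h23 (hu.mono hsub).fun_neg
      (fun x hx => (hu' x (hsub' hx)).fun_neg) (hφ.mono_set hsub) (hw_int.mono_set hsub)
      fun x hx => ?_
    have hx' := hsub (Ioo_subset_Icc_self hx)
    have hN_le : N x ≤ (A + J / w t₂) * w x :=
      (div_le_iff₀ (hw_pos x hx')).1 (quotient_le h12 hx.1.le hx'.2)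
    linarith [(abs_le.1 (huN x (hsub' hx))).1]
  have error : J / w t₂ * ∫ x in t₂..t₃, w x ≤ J * (M * (t₂ - t₁)) := by
    rw [div_mul_eq_mul_div, mul_div_assoc]
    exact mul_le_mul_of_nonneg_left (integral_div_le_mul_sub h12 hM (hw_pos t₂ ht₂)
      (hw_mono.mono (Icc_subset_Icc_right h23)) hMw) hJ_nonneg
  have cancel : A * (M * ∫ x in t₁..t₂, w x) = A * ∫ x in t₂..t₃, w x := by rw [hMw]
  linear_combination M * left + right + error - cancel

end WeightedInterpolation

section ObservationWeight

variable {T lam C₀ C₁ : ℝ}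

/-- The weight `w t = e^{t C₁} / (T - t + λ)^{1 + C₀}` integrated in `Mconst`. It is meaningful for
`t < T + λ`. -/
def obsWeight (T lam C₀ C₁ t : ℝ) : ℝ :=
  exp (t * C₁) / (T - t + lam) ^ (1 + C₀)

theorem obsWeight_pos {t : ℝ} (ht : 0 < T - t + lam) : 0 < obsWeight T lam C₀ C₁ t :=
  div_pos (exp_pos _) (rpow_pos_of_pos ht _)

theorem hasDerivAt_obsWeight {t : ℝ} (ht : 0 < T - t + lam) :
    HasDerivAt (obsWeight T lam C₀ C₁)
      (((1 + C₀) / (T - t + lam) + C₁) * obsWeight T lam C₀ C₁ t) t := by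
  have hpow : HasDerivAt (fun x => (T - x + lam) ^ (1 + C₀))
      (-1 * (1 + C₀) * (T - t + lam) ^ (1 + C₀ - 1)) t :=
    (((hasDerivAt_id t).const_sub T).add_const lam).rpow_const (Or.inl ht.ne')
  have hne : (T - t + lam) ^ (1 + C₀) ≠ 0 := (rpow_pos_of_pos ht _).ne'
  refine ((((hasDerivAt_id t).mul_const C₁).exp).div hpow hne).congr_deriv ?_
  rw [rpow_sub_one ht.ne', obsWeight]
  simp only [id_eq]
  field_simp
  ring

theorem monotoneOn_obsWeight (hC₀ : 0 ≤ 1 + C₀) (hC₁ : 0 ≤ C₁) :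
    MonotoneOn (obsWeight T lam C₀ C₁) (Iio (T + lam)) := by
  intro s _ t ht hst
  have hr : 0 < T - t + lam := by linarith [mem_Iio.1 ht]
  have : 0 < (T - t + lam) ^ (1 + C₀) := rpow_pos_of_pos hr _
  unfold obsWeight
  gcongr

theorem integral_obsWeight_pos {s t : ℝ} (hst : s < t) (ht : 0 < T - t + lam) :
    0 < ∫ x in s..t, obsWeight T lam C₀ C₁ x := by
  have hpos : ∀ x ∈ Icc s t, 0 < T - x + lam := fun x hx => by linarith [hx.2]
  refine intervalIntegral.intervalIntegral_pos_of_pos_on (ContinuousOn.intervalIntegrable ?_)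
    (fun x hx => obsWeight_pos (hpos x (Ioo_subset_Icc_self hx))) hst
  rw [uIcc_of_le hst.le]
  exact fun x hx => (hasDerivAt_obsWeight (hpos x hx)).continuousAt.continuousWithinAt

theorem Mconst_pos {t₁ t₂ t₃ : ℝ} (h12 : t₁ < t₂) (h23 : t₂ < t₃) (ht₃ : 0 < T - t₃ + lam) :
    0 < Mconst T lam C₀ C₁ t₁ t₂ t₃ :=
  div_pos (integral_obsWeight_pos h23 ht₃) (integral_obsWeight_pos h12 (by linarith))

theorem integral_obsWeight_eq_Mconst_mul {t₁ t₂ t₃ : ℝ} (h12 : t₁ < t₂)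
    (ht₂ : 0 < T - t₂ + lam) :
    ∫ x in t₂..t₃, obsWeight T lam C₀ C₁ x =
      Mconst T lam C₀ C₁ t₁ t₂ t₃ * ∫ x in t₁..t₂, obsWeight T lam C₀ C₁ x :=
  (div_mul_cancel₀ _ (integral_obsWeight_pos h12 ht₂).ne').symm

theorem continuousOn_const_div_sub_add {t : ℝ} (ht : 0 < T - t + lam) :
    ContinuousOn (fun x => C₀ / (T - x + lam)) (Iic t) := fun x hx => by
  have hx' : T - x + lam ≠ 0 := by linarith [mem_Iic.1 hx]
  fun_prop (disch := assumption)

theorem integral_const_div_sub_add {s t : ℝ} (hst : s ≤ t) (ht : 0 < T - t + lam) :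
    ∫ x in s..t, C₀ / (T - x + lam) = C₀ * log ((T - s + lam) / (T - t + lam)) := by
  have hsubst := intervalIntegral.integral_comp_sub_left (fun x => 1 / x) (T + lam)
    (a := s) (b := t)
  rw [integral_one_div_of_pos (by linarith) (by linarith), add_sub_right_comm,
    add_sub_right_comm] at hsubst
  rw [← hsubst, ← intervalIntegral.integral_const_mul]
  exact intervalIntegral.integral_congr fun x _ => by simp only [add_sub_right_comm, mul_one_div]

theorem mul_integral_add_integral_le {t₁ t₂ t₃ K M : ℝ} (h12 : t₁ ≤ t₂) (h23 : t₂ ≤ t₃)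
    (ht₃ : 0 < T - t₃ + lam) (hC₀ : 0 ≤ C₀) (hK : 0 ≤ K) (hM : 0 ≤ M)
    (hlen : t₃ - t₂ ≤ M * (t₂ - t₁)) :
    M * (∫ x in t₁..t₂, (C₀ / (T - x + lam) + K)) + ∫ x in t₂..t₃, (C₀ / (T - x + lam) + K) ≤
      C₀ * (1 + M) * log ((T - t₁ + lam) / (T - t₃ + lam)) + 2 * (M * (t₂ - t₁)) * K := by
  have integral_eq : ∀ s t, s ≤ t → 0 < T - t + lam → ∫ x in s..t, (C₀ / (T - x + lam) + K) =
      C₀ * log ((T - s + lam) / (T - t + lam)) + (t - s) * K := fun s t hst ht => by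
    rw [intervalIntegral.integral_add _ intervalIntegrable_const, integral_const_div_sub_add hst ht,
      intervalIntegral.integral_const, smul_eq_mul]
    refine ((continuousOn_const_div_sub_add ht).mono ?_).intervalIntegrable
    exact uIcc_of_le hst ▸ Icc_subset_Iic_self
  have hr₁ : 0 < T - t₁ + lam := by linarith
  have hr₂ : 0 < T - t₂ + lam := by linarith
  have hlog12 : log ((T - t₁ + lam) / (T - t₂ + lam)) ≤ log ((T - t₁ + lam) / (T - t₃ + lam)) := by
    gcongr
  have hlog23 : log ((T - t₂ + lam) / (T - t₃ + lam)) ≤ log ((T - t₁ + lam) / (T - t₃ + lam)) := by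
    gcongr
  rw [integral_eq t₁ t₂ h12 hr₂, integral_eq t₂ t₃ h23 ht₃]
  linear_combination M * C₀ * hlog12 + C₀ * hlog23 + K * hlen

end ObservationWeight

theorem rpow_le_mul_rpow_mul_exp_mul_rpow {a b c r p q d e : ℝ} (ha : 0 < a) (hb : 0 < b)
    (hc : 0 < c) (hr : 0 < r) (h : p * log a ≤ log b + q * log c + d + e * log r) :
    a ^ p ≤ b * c ^ q * exp d * r ^ e := by
  calc a ^ p = exp (p * log a) := by rw [rpow_def_of_pos ha, mul_comm]
    _ ≤ exp (log b + q * log c + d + e * log r) := exp_le_exp.2 h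
    _ = b * c ^ q * exp d * r ^ e := by
        rw [exp_add, exp_add, exp_add, exp_log hb, rpow_def_of_pos hc, rpow_def_of_pos hr,
          mul_comm q, mul_comm e]

theorem abs_half_mul_div_add_le {y y' N c f S : ℝ} (hy : 0 < y) (hf : f ≤ S)
    (h : |1 / 2 * y' + N * y| ≤ c * y + f * y) : |1 / 2 * (y' / y) + N| ≤ c + S := by
  have hdiv : 1 / 2 * (y' / y) + N = (1 / 2 * y' + N * y) / y := by field_simp
  rw [hdiv, abs_div, abs_of_pos hy, div_le_iff₀ hy, add_mul]
  linarith [mul_le_mul_of_nonneg_right hf hy.le]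

theorem observation_kinetic_lemma4_3_general {T lam C₀ C₁ t₁ t₂ t₃ : ℝ} {F₁ F₂ y N y' N' : ℝ → ℝ}
    (hC₀ : 0 ≤ C₀) (hC₁ : 0 ≤ C₁) (h12 : t₁ < t₂) (h23 : t₂ < t₃) (ht₃ : 0 < T - t₃ + lam)
    (hF₁ : BddAbove ((fun t => |F₁ t|) '' Icc t₁ t₃)) (hF₂ : IntegrableOn F₂ (Icc t₁ t₃))
    (hy : ContinuousOn y (Icc t₁ t₃)) (hy' : ∀ t ∈ Ioo t₁ t₃, HasDerivAt y (y' t) t)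
    (hN : ContinuousOn N (Icc t₁ t₃)) (hN' : ∀ t ∈ Ioo t₁ t₃, HasDerivAt N (N' t) t)
    (hy_pos : ∀ t ∈ Icc t₁ t₃, 0 < y t)
    (hyN : ∀ t ∈ Ioo t₁ t₃,
      |1 / 2 * y' t + N t * y t| ≤ (C₀ / (T - t + lam) + C₁) * y t + F₁ t * y t)
    (hNF : ∀ t ∈ Ioo t₁ t₃, N' t ≤ ((1 + C₀) / (T - t + lam) + C₁) * N t + F₂ t) :
    y t₂ ^ (1 + Mconst T lam C₀ C₁ t₁ t₂ t₃) ≤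
      y t₃ * y t₁ ^ Mconst T lam C₀ C₁ t₁ t₂ t₃ *
        exp (4 * Dconst T lam C₀ C₁ F₁ F₂ t₁ t₂ t₃) *
        ((T - t₁ + lam) / (T - t₃ + lam)) ^ (2 * C₀ * (1 + Mconst T lam C₀ C₁ t₁ t₂ t₃)) := by
  set M := Mconst T lam C₀ C₁ t₁ t₂ t₃ with hM_def
  set S := sSup ((fun t => |F₁ t|) '' Icc t₁ t₃) with hS_def
  have h13 : t₁ ≤ t₃ := (h12.trans h23).le
  have ht₁_mem : t₁ ∈ Icc t₁ t₃ := left_mem_Icc.2 h13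
  have ht₂_mem : t₂ ∈ Icc t₁ t₃ := ⟨h12.le, h23.le⟩
  have hr : ∀ t ∈ Icc t₁ t₃, 0 < T - t + lam := fun t ht => by linarith [ht.2]
  have hS : ∀ t ∈ Icc t₁ t₃, |F₁ t| ≤ S := fun t ht => le_csSup hF₁ (mem_image_of_mem _ ht)
  have hS_nonneg : 0 ≤ S := (abs_nonneg _).trans (hS t₁ ht₁_mem)
  have hw_mono : MonotoneOn (obsWeight T lam C₀ C₁) (Icc t₁ t₃) :=
    (monotoneOn_obsWeight (by linarith) hC₁).mono fun t ht => mem_Iio.2 (by linarith [hr t ht])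
  have hM : 0 ≤ M := (Mconst_pos h12 h23 ht₃).le
  have hMw := integral_obsWeight_eq_Mconst_mul (C₀ := C₀) (C₁ := C₁) (t₃ := t₃) h12 (hr t₂ ht₂_mem)
  have hφ : IntegrableOn (fun t => C₀ / (T - t + lam) + (C₁ + S)) (Icc t₁ t₃) :=
    (((continuousOn_const_div_sub_add ht₃).mono Icc_subset_Iic_self).add
      continuousOn_const).integrableOn_Icc
  have hyN_le : ∀ t ∈ Ioo t₁ t₃,
      |1 / 2 * (y' t / y t) + N t| ≤ C₀ / (T - t + lam) + (C₁ + S) := fun t ht => by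
    have ht' := Ioo_subset_Icc_self ht
    rw [← add_assoc]
    exact abs_half_mul_div_add_le (hy_pos t ht') ((le_abs_self _).trans (hS t ht')) (hyN t ht)
  have hlog := one_add_mul_le_of_abs_deriv_add_le h12.le h23.le
    (fun t ht => hasDerivAt_obsWeight (hr t ht)) (fun t ht => obsWeight_pos (hr t ht)) hw_mono
    hN hN' hF₂ hNF (u := fun t => 1 / 2 * log (y t)) (u' := fun t => 1 / 2 * (y' t / y t))
    (continuousOn_const.mul (hy.log fun t ht => (hy_pos t ht).ne'))
    (fun t ht => ((hy' t ht).log (hy_pos t (Ioo_subset_Icc_self ht)).ne').const_mul _) hφ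
    hyN_le hM hMw
  have hφ_le := mul_integral_add_integral_le h12.le h23.le ht₃ hC₀ (add_nonneg hC₁ hS_nonneg) hM
    (sub_le_mul_sub_of_integral_eq h12.le h23.le hM (obsWeight_pos (hr t₂ ht₂_mem)) hw_mono hMw)
  refine rpow_le_mul_rpow_mul_exp_mul_rpow (hy_pos t₂ ht₂_mem) (hy_pos t₃ (right_mem_Icc.2 h13))
    (hy_pos t₁ ht₁_mem) (div_pos (hr t₁ ht₁_mem) ht₃) ?_
  rw [Dconst, ← hM_def, ← hS_def]
  linear_combination 2 * hlog + 2 * hφ_le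

/-- **Lemma 4.3.** Log-convexity type estimate for positive `C¹` functions `y, N`
on `[0,T]` satisfying the differential inequalities
`|½y' + Ny| ≤ (C₀/(T−t+λ) + C₁)y + F₁ y` and
`N' ≤ ((1+C₀)/(T−t+λ) + C₁) N + F₂`. -/
theorem observation_kinetic_lemma4_3
    (T lam C₀ C₁ : ℝ) (hT : 0 < T) (hlam : 0 < lam) (hC₀ : 0 ≤ C₀) (hC₁ : 0 ≤ C₁)
    (F₁ F₂ y N y' N' : ℝ → ℝ)
    (hF₁ : ContinuousOn F₁ (Icc 0 T)) (hF₂ : ContinuousOn F₂ (Icc 0 T))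
    (hy : ∀ t ∈ Icc (0:ℝ) T, HasDerivAt y (y' t) t) (hy' : ContinuousOn y' (Icc 0 T))
    (hN : ∀ t ∈ Icc (0:ℝ) T, HasDerivAt N (N' t) t) (hN' : ContinuousOn N' (Icc 0 T))
    (hypos : ∀ t ∈ Icc (0:ℝ) T, 0 < y t) (hNpos : ∀ t ∈ Icc (0:ℝ) T, 0 < N t)
    (hineq1 : ∀ t ∈ Icc (0:ℝ) T,
      |(1/2) * y' t + N t * y t| ≤ (C₀ / (T - t + lam) + C₁) * y t + F₁ t * y t)
    (hineq2 : ∀ t ∈ Icc (0:ℝ) T,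
      N' t ≤ ((1 + C₀) / (T - t + lam) + C₁) * N t + F₂ t)
    (t₁ t₂ t₃ : ℝ) (h01 : 0 ≤ t₁) (h12 : t₁ < t₂) (h23 : t₂ < t₃) (h3T : t₃ ≤ T) :
    y t₂ ^ (1 + Mconst T lam C₀ C₁ t₁ t₂ t₃) ≤
      y t₃ * y t₁ ^ Mconst T lam C₀ C₁ t₁ t₂ t₃ *
        Real.exp (4 * Dconst T lam C₀ C₁ F₁ F₂ t₁ t₂ t₃) *
        ((T - t₁ + lam) / (T - t₃ + lam)) ^ (2 * C₀ * (1 + Mconst T lam C₀ C₁ t₁ t₂ t₃)) := by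
  have hsub : Icc t₁ t₃ ⊆ Icc 0 T := Icc_subset_Icc h01 h3T
  have hsub' : Ioo t₁ t₃ ⊆ Icc 0 T := Ioo_subset_Icc_self.trans hsub
  exact observation_kinetic_lemma4_3_general hC₀ hC₁ h12 h23 (by linarith)
    (isCompact_Icc.image_of_continuousOn (hF₁.mono hsub).abs).bddAbove
    (hF₂.mono hsub).integrableOn_Icc
    (fun t ht => (hy t (hsub ht)).continuousAt.continuousWithinAt) (fun t ht => hy t (hsub' ht))
    (fun t ht => (hN t (hsub ht)).continuousAt.continuousWithinAt) (fun t ht => hN t (hsub' ht))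
    (fun t ht => hypos t (hsub ht)) (fun t ht => hineq1 t (hsub' ht))
    (fun t ht => hineq2 t (hsub' ht))

end
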